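/- arXiv:1703.07505 — 3 statements merged into one kernel-verified Lean document; each statement's English description precedes it below -/
import Mathlib

section
/- Let R be a commutative ring, n a natural number, B = R[t]/(t^{n+1}), and M an R-module. Equip Hom_R(B, M) with the B-module structure (b • φ)(x) = φ(b·x), and equip M ⊗_R B with the B-module structure acting on the second factor. Then the map M ⊗_R B → Hom_R(B, M) sending m ⊗ b to the R-linear map x ↦ coeff_n(b·x) • m is an isomorphism of B-modules. -/
/-!
Write `B = R[t]/(t^{n+1})`. It is free over `R` on `1, t, …, t^n`, and the functional
`τ = coeff_n : B → R` satisfies `τ(t^i t^j) = 1` if `i + j = n` and `0` for the other pairs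
`i, j ≤ n`. Hence `t^i` and `t^{n-i}` are dual bases for the pairing `(b, x) ↦ τ(b x)`, and the
inverse of `m ⊗ b ↦ (x ↦ τ(b x) • m)` is `φ ↦ ∑_{i ≤ n} φ(t^{n-i}) ⊗ t^i`. That these maps are
mutually inverse comes down to the expansion `mk_eq_sum_coeff` of a class in powers of `t`.
`B`-linearity is associativity and commutativity of multiplication in `B`.
-/

open Polynomial TensorProduct

namespace TruncatedDuality

variable (R : Type*) [CommRing R] (n : ℕ)

/-- The truncated polynomial ring `R[t]/(t^{n+1})`. -/
abbrev Trunc : Type _ := Polynomial R ⧸ Ideal.span {(X : Polynomial R) ^ (n + 1)}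

/-- The projection `R[t] → R[t]/(t^{n+1})`. -/
noncomputable abbrev proj : Polynomial R →+* Trunc R n :=
  Ideal.Quotient.mk (Ideal.span {(X : Polynomial R) ^ (n + 1)})

variable {R} in
lemma mk_eq_sum_coeff (p : Polynomial R) :
    proj R n p = ∑ i ∈ Finset.range (n + 1), p.coeff i • proj R n (X ^ i) := by
  have h : (∑ i ∈ Finset.range (n + 1), p.coeff i • proj R n (X ^ i)) =
      proj R n (∑ i ∈ Finset.range (n + 1), p.coeff i • X ^ i) := by
    rw [map_sum]
    rfl
  rw [h, Ideal.Quotient.eq, Ideal.mem_span_singleton, X_pow_dvd_iff]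
  intro d hd
  simp [coeff_X_pow, hd]

/-- The functional `coeff_n` on `R[t]/(t^{n+1})`. -/
noncomputable def topCoeff : Trunc R n →ₗ[R] R :=
  Submodule.liftQ ((Ideal.span {(X : Polynomial R) ^ (n + 1)}).restrictScalars R)
    (Polynomial.lcoeff R n) (by
      intro p hp
      rw [Submodule.restrictScalars_mem, Ideal.mem_span_singleton, X_pow_dvd_iff] at hp
      exact hp n n.lt_succ_self)

lemma topCoeff_mk (p : Polynomial R) : topCoeff R n (proj R n p) = p.coeff n := rfl

variable (M : Type*) [AddCommGroup M] [Module R M]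

/-- The map `m ⊗ b ↦ (x ↦ coeff_n(b x) • m)`. -/
noncomputable def toHom : M ⊗[R] Trunc R n →ₗ[R] (Trunc R n →ₗ[R] M) :=
  TensorProduct.lift (LinearMap.mk₂ R
    (fun m b => (topCoeff R n ∘ₗ LinearMap.mul R (Trunc R n) b).smulRight m)
    (fun _ _ _ => LinearMap.ext fun _ => smul_add _ _ _)
    (fun _ _ _ => LinearMap.ext fun _ => smul_comm _ _ _)
    (fun _ _ _ => LinearMap.ext fun _ => by
      simp only [map_add, LinearMap.comp_add, LinearMap.smulRight_apply, LinearMap.add_apply,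
        add_smul])
    (fun _ _ _ => LinearMap.ext fun _ => by
      simp only [map_smul, LinearMap.comp_smul, LinearMap.smulRight_apply, LinearMap.smul_apply,
        smul_assoc]))

variable {M} in
lemma toHom_tmul (m : M) (b x : Trunc R n) :
    toHom R n M (m ⊗ₜ[R] b) x = topCoeff R n (b * x) • m := rfl

/-- The map `φ ↦ ∑_{i ≤ n} φ(t^{n-i}) ⊗ t^i`, inverse to `toHom`. -/
noncomputable def ofHom : (Trunc R n →ₗ[R] M) →ₗ[R] M ⊗[R] Trunc R n :=
  ∑ i ∈ Finset.range (n + 1),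
    (TensorProduct.mk R M (Trunc R n)).flip (proj R n (X ^ i)) ∘ₗ
      LinearMap.applyₗ (proj R n (X ^ (n - i)))

variable {M} in
lemma ofHom_apply (φ : Trunc R n →ₗ[R] M) :
    ofHom R n M φ = ∑ i ∈ Finset.range (n + 1),
      φ (proj R n (X ^ (n - i))) ⊗ₜ[R] proj R n (X ^ i) := by
  simp [ofHom]

lemma toHom_comp_ofHom : toHom R n M ∘ₗ ofHom R n M = LinearMap.id := by
  refine LinearMap.ext fun φ => LinearMap.ext fun x => ?_
  obtain ⟨q, rfl⟩ := Ideal.Quotient.mk_surjective x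
  change toHom R n M (ofHom R n M φ) (proj R n q) = φ (proj R n q)
  conv_rhs => rw [mk_eq_sum_coeff n q, map_sum, ← Finset.sum_range_reflect]
  rw [ofHom_apply, map_sum, LinearMap.sum_apply]
  refine Finset.sum_congr rfl fun i hi => ?_
  have hi' : i ≤ n := Nat.lt_succ_iff.mp (Finset.mem_range.mp hi)
  have h₁ : n + 1 - 1 - i = n - i := by omega
  rw [toHom_tmul, ← map_mul, topCoeff_mk, coeff_X_pow_mul', map_smul, h₁,
    if_pos hi']

lemma ofHom_comp_toHom : ofHom R n M ∘ₗ toHom R n M = LinearMap.id := by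
  refine TensorProduct.ext' fun m b => ?_
  obtain ⟨p, rfl⟩ := Ideal.Quotient.mk_surjective b
  change ofHom R n M (toHom R n M (m ⊗ₜ[R] proj R n p)) = m ⊗ₜ[R] proj R n p
  conv_rhs => rw [mk_eq_sum_coeff n p, tmul_sum]
  rw [ofHom_apply]
  refine Finset.sum_congr rfl fun i hi => ?_
  have hi' : i ≤ n := Nat.lt_succ_iff.mp (Finset.mem_range.mp hi)
  rw [toHom_tmul, ← map_mul, topCoeff_mk, coeff_mul_X_pow', if_pos (Nat.sub_le n i),
    Nat.sub_sub_self hi', smul_tmul]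

end TruncatedDuality

/-- For `B = R[t]/(t^{n+1})` and an `R`-module `M`, the map
`M ⊗_R B → Hom_R(B, M)` sending `m ⊗ b` to `x ↦ coeff_n(b·x) • m` is an isomorphism of
`B`-modules, where `B` acts on `Hom_R(B, M)` by precomposition and on `M ⊗_R B` through the
second factor.  `B`-linearity is expressed elementwise on pure tensors:
`e (m ⊗ (c * b)) x = e (m ⊗ b) (c * x)`. -/
theorem stmt2 (R M : Type*) [CommRing R] [AddCommGroup M] [Module R M] (n : ℕ) :
    ∃ e : (M ⊗[R] (Polynomial R ⧸ Ideal.span {(X : Polynomial R) ^ (n + 1)})) ≃ₗ[R]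
        ((Polynomial R ⧸ Ideal.span {(X : Polynomial R) ^ (n + 1)}) →ₗ[R] M),
      (∀ (m : M) (p q : Polynomial R),
        e (m ⊗ₜ[R] Ideal.Quotient.mk (Ideal.span {(X : Polynomial R) ^ (n + 1)}) p)
            (Ideal.Quotient.mk (Ideal.span {(X : Polynomial R) ^ (n + 1)}) q)
          = (p * q).coeff n • m) ∧
      (∀ (m : M) (c b x : Polynomial R ⧸ Ideal.span {(X : Polynomial R) ^ (n + 1)}),
        e (m ⊗ₜ[R] (c * b)) x = e (m ⊗ₜ[R] b) (c * x)) := by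
  refine ⟨LinearEquiv.ofLinearMap (TruncatedDuality.toHom R n M) (TruncatedDuality.ofHom R n M)
    (TruncatedDuality.toHom_comp_ofHom R n M) (TruncatedDuality.ofHom_comp_toHom R n M),
    fun m p q => rfl, fun m c b x => ?_⟩
  change TruncatedDuality.toHom R n M (m ⊗ₜ[R] (c * b)) x =
    TruncatedDuality.toHom R n M (m ⊗ₜ[R] b) (c * x)
  rw [TruncatedDuality.toHom_tmul, TruncatedDuality.toHom_tmul, mul_assoc, mul_left_comm]
end

section
/- For every commutative ring R and every R-algebra A, there exists an arc algebra of A over R; that is, there exist an R-algebra J and bijections θ_C : Hom_{R-alg}(J, C) → Hom_{R-alg}(A, C⟦t⟧), one for each commutative R-algebra C, which are natural in C. -/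
/-!
The arc algebra is built by generators and relations. Let `P = R[x_{a,n} : a ∈ A, n ∈ ℕ]` and let
`F a = ∑ x_{a,n} tⁿ ∈ P⟦t⟧` be the generic power series attached to `a`. The arc algebra `J` is the
quotient of `P` by the coefficients of the series expressing that `a ↦ F a` is additive,
multiplicative and compatible with the structure maps from `R`. By construction `F` reduces to an
`R`-algebra homomorphism `A → J⟦t⟧` (`ArcConstr.univ`), and `θ_C ψ` is its composite with
`ψ` applied to coefficients, so naturality is functoriality of `psMap`. Conversely, the
coefficients of any `f : A → C⟦t⟧` define an evaluation `P → C` which kills all the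
relations because `f` is a homomorphism, hence factors through `J` (`ArcConstr.desc`).
-/

universe u

/-- The `R`-algebra homomorphism `C⟦t⟧ → C'⟦t⟧` applying an `R`-algebra homomorphism
`g : C → C'` to coefficients. -/
noncomputable def psMap {R C C' : Type u} [CommRing R] [CommRing C] [CommRing C']
    [Algebra R C] [Algebra R C'] (g : C →ₐ[R] C') :
    PowerSeries C →ₐ[R] PowerSeries C' :=
  { PowerSeries.map (g : C →+* C') with
    commutes' := fun r => by
      simp [PowerSeries.algebraMap_apply, PowerSeries.map_C] }

/-- An arc algebra of `A` over `R`: an `R`-algebra `J` together with bijections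
`θ_C : Hom_{R-alg}(J, C) ≃ Hom_{R-alg}(A, C⟦t⟧)`, natural in `C`. -/
structure ArcAlgebra (R A : Type u) [CommRing R] [CommRing A] [Algebra R A] where
  carrier : Type u
  [commRing : CommRing carrier]
  [alg : Algebra R carrier]
  θ : ∀ (C : Type u) [CommRing C] [Algebra R C],
      (carrier →ₐ[R] C) ≃ (A →ₐ[R] PowerSeries C)
  naturality : ∀ (C C' : Type u) [CommRing C] [Algebra R C] [CommRing C'] [Algebra R C']
      (g : C →ₐ[R] C') (ψ : carrier →ₐ[R] C),
      θ C' (g.comp ψ) = (psMap g).comp (θ C ψ)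

namespace ArcConstr

variable (R A : Type u) [CommRing R] [CommRing A] [Algebra R A]

/-- The generic power series `∑ x_{a,n} tⁿ` attached to `a : A`. -/
noncomputable def generic (a : A) : PowerSeries (MvPolynomial (A × ℕ) R) :=
  PowerSeries.mk fun n => MvPolynomial.X (a, n)

/-- The power series whose vanishing says that `a ↦ generic a` is an `R`-algebra homomorphism.
Preservation of `0` and `1` is the last family at `r = 0` and `r = 1`. -/
def relSeries : Set (PowerSeries (MvPolynomial (A × ℕ) R)) :=
  {s | (∃ a b, s = generic R A (a + b) - (generic R A a + generic R A b)) ∨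
    (∃ a b, s = generic R A (a * b) - generic R A a * generic R A b) ∨
    ∃ r, s = generic R A (algebraMap R A r) - algebraMap R _ r}

/-- The ideal generated by all coefficients of the relation series. -/
noncomputable def relIdeal : Ideal (MvPolynomial (A × ℕ) R) :=
  Ideal.span {p | ∃ s ∈ relSeries R A, ∃ n, p = PowerSeries.coeff n s}

/-- The underlying `R`-algebra of the arc algebra. -/
abbrev Carrier : Type u := MvPolynomial (A × ℕ) R ⧸ relIdeal R A

variable {R A} in
lemma psMap_mk_eq_zero {s : PowerSeries (MvPolynomial (A × ℕ) R)} (hs : s ∈ relSeries R A) :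
    psMap (Ideal.Quotient.mkₐ R (relIdeal R A)) s = 0 := by
  ext n
  exact Ideal.Quotient.eq_zero_iff_mem.2 (Ideal.subset_span ⟨s, hs, n, rfl⟩)

/-- The universal arc `A → J⟦t⟧`. -/
noncomputable def univ : A →ₐ[R] PowerSeries (Carrier R A) :=
  let φ := psMap (Ideal.Quotient.mkₐ R (relIdeal R A))
  have hadd (a b : A) : φ (generic R A (a + b)) = φ (generic R A a) + φ (generic R A b) := by
    rw [← map_add, ← sub_eq_zero, ← map_sub]
    exact psMap_mk_eq_zero (Or.inl ⟨a, b, rfl⟩)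
  have hmul (a b : A) : φ (generic R A (a * b)) = φ (generic R A a) * φ (generic R A b) := by
    rw [← map_mul, ← sub_eq_zero, ← map_sub]
    exact psMap_mk_eq_zero (Or.inr (Or.inl ⟨a, b, rfl⟩))
  have halg (r : R) : φ (generic R A (algebraMap R A r)) = algebraMap R _ r := by
    rw [← φ.commutes, ← sub_eq_zero, ← map_sub]
    exact psMap_mk_eq_zero (Or.inr (Or.inr ⟨r, rfl⟩))
  { toFun := fun a => φ (generic R A a)
    map_zero' := by simpa using halg 0
    map_one' := by simpa using halg 1
    map_add' := hadd
    map_mul' := hmul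
    commutes' := halg }

lemma coeff_univ (a : A) (n : ℕ) : PowerSeries.coeff n (univ R A a) =
    Ideal.Quotient.mkₐ R (relIdeal R A) (MvPolynomial.X (a, n)) := by
  change PowerSeries.coeff n (PowerSeries.map
    (Ideal.Quotient.mkₐ R (relIdeal R A) : _ →+* Carrier R A) (generic R A a)) = _
  simp [generic]

variable {R A} {C : Type u} [CommRing C] [Algebra R C]

/-- The evaluation `P → C` given by the coefficients of an arc `f : A → C⟦t⟧`. -/
noncomputable def evalArc (f : A →ₐ[R] PowerSeries C) : MvPolynomial (A × ℕ) R →ₐ[R] C :=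
  MvPolynomial.aeval fun p => PowerSeries.coeff p.2 (f p.1)

lemma psMap_evalArc_generic (f : A →ₐ[R] PowerSeries C) (a : A) :
    psMap (evalArc f) (generic R A a) = f a := by
  ext n
  change PowerSeries.coeff n (PowerSeries.map (evalArc f : _ →+* C) (generic R A a)) = _
  simp [generic, evalArc]

lemma evalArc_eq_zero (f : A →ₐ[R] PowerSeries C) (p : MvPolynomial (A × ℕ) R)
    (hp : p ∈ relIdeal R A) : evalArc f p = 0 := by
  suffices h : relIdeal R A ≤ RingHom.ker (evalArc f) from h hp
  refine Ideal.span_le.2 ?_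
  rintro _ ⟨s, hs, n, rfl⟩
  have h0 : psMap (evalArc f) s = 0 := by
    rcases hs with ⟨a, b, rfl⟩ | ⟨a, b, rfl⟩ | ⟨r, rfl⟩
    · simp only [map_sub, map_add, psMap_evalArc_generic, sub_self]
    · simp only [map_sub, map_mul, psMap_evalArc_generic, sub_self]
    · simp only [map_sub, AlgHom.commutes, psMap_evalArc_generic, sub_self]
  exact congrArg (PowerSeries.coeff n) h0

/-- The homomorphism `J → C` classifying an arc `f : A → C⟦t⟧`. -/
noncomputable def desc (f : A →ₐ[R] PowerSeries C) : Carrier R A →ₐ[R] C :=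
  Ideal.Quotient.liftₐ (relIdeal R A) (evalArc f) (evalArc_eq_zero f)

lemma coeff_psMap_univ (ψ : Carrier R A →ₐ[R] C) (a : A) (n : ℕ) :
    PowerSeries.coeff n (psMap ψ (univ R A a)) =
      ψ (Ideal.Quotient.mkₐ R (relIdeal R A) (MvPolynomial.X (a, n))) := by
  rw [← coeff_univ]
  rfl

end ArcConstr

/-- for every commutative ring `R` and every `R`-algebra `A`, an arc algebra of
`A` over `R` exists. -/
theorem stmt6 (R A : Type u) [CommRing R] [CommRing A] [Algebra R A] :
    Nonempty (ArcAlgebra R A) := by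
  refine ⟨{
    carrier := ArcConstr.Carrier R A
    θ := fun C _ _ =>
      { toFun := fun ψ => (psMap ψ).comp (ArcConstr.univ R A)
        invFun := ArcConstr.desc
        left_inv := fun ψ => ?_
        right_inv := fun f => ?_ }
    naturality := fun C C' _ _ _ _ g ψ => rfl }⟩
  · apply Ideal.Quotient.algHom_ext
    apply MvPolynomial.algHom_ext
    rintro ⟨a, n⟩
    change ArcConstr.evalArc _ (MvPolynomial.X (a, n)) = _
    simp only [ArcConstr.evalArc, MvPolynomial.aeval_X, AlgHom.comp_apply,
      ArcConstr.coeff_psMap_univ]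
  · ext a n
    rw [AlgHom.comp_apply, ArcConstr.coeff_psMap_univ]
    change ArcConstr.evalArc f (MvPolynomial.X (a, n)) = _
    simp only [ArcConstr.evalArc, MvPolynomial.aeval_X]
end

section
/- Let R be a commutative local ring with maximal ideal m and residue field k = R/m. Then the m-adic completion of R (the inverse limit of the rings R/m^n) is a Noetherian ring if and only if the k-vector space m/m² is finite-dimensional, i.e. if and only if R has finite embedding dimension. -/
/-!
Write `R̂` for the completion and `F n` for the kernel of `R̂ → R ⧸ m ^ n`.

If `R̂` is Noetherian, then `F 1` is finitely generated; its image in `R ⧸ m ^ 2` is `m ⧸ m ^ 2`,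
which is therefore a finite module (`finiteDimensional_of_isNoetherianRing`).

Conversely, lift a basis of `m ⧸ m ^ 2` to get a finitely generated ideal `J ≤ m` with
`m = J + m ^ 2`. Then `m ^ n = J ^ n + m ^ (n + 1)`, whence `F n = J ^ n R̂ + F (n + 1)` for all `n`:
the graded ring of the filtration `F` is generated by finitely many elements over the field
`R̂ ⧸ F 1`, hence is Noetherian. As `R̂` is separated and complete for `F`, the classical argument of
lifting generators of the ideal of initial forms shows that every ideal `K` of `R̂` is finitely
generated: elements `b i` of `K` whose initial forms generate those of `K` allow any `y ∈ K` to be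
approximated successively, and the coefficients of the approximations converge
(`isNoetherianRing_of_filtration`). Working with the filtration `F` rather than with powers of an
ideal avoids having to know that `F n` is the `n`-th power of `m R̂`.

The graded ring enters through the Rees algebra of `J R̂`: it is of finite type over `R̂`, so its
quotient by the ideal generated by `F 1` is of finite type over `R̂ ⧸ F 1`, and this quotient maps
onto the graded ring of `F`.
-/

open Polynomial

/-! ### Rings complete for a filtration -/

theorem reesAlgebra_quotient_isNoetherianRing {A : Type*} [CommRing A] {J F₁ : Ideal A}
    (hJ : J.FG) [IsNoetherianRing (A ⧸ F₁)] :
    IsNoetherianRing (reesAlgebra J ⧸ F₁.map (algebraMap A (reesAlgebra J))) := by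
  have h₁ : Algebra.FiniteType A (reesAlgebra J) := ⟨(reesAlgebra J).fg_top.mpr (reesAlgebra.fg hJ)⟩
  have h₂ : Algebra.FiniteType A (reesAlgebra J ⧸ F₁.map (algebraMap A (reesAlgebra J))) :=
    h₁.of_surjective (Ideal.Quotient.mkₐ A _) (Ideal.Quotient.mkₐ_surjective A _)
  have h₃ : Algebra.FiniteType (A ⧸ F₁) (reesAlgebra J ⧸ F₁.map (algebraMap A (reesAlgebra J))) :=
    Algebra.FiniteType.of_restrictScalars_finiteType A _ _
  exact Algebra.FiniteType.isNoetherianRing (A ⧸ F₁)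
    (reesAlgebra J ⧸ F₁.map (algebraMap A (reesAlgebra J)))

/-- For an ideal `K` of a ring `A` filtered by ideals `F n` with `J ^ n ≤ F n`, the preimage in the
Rees algebra `⨁ Jⁿ tⁿ ⊆ A[t]` of the ideal of initial forms of `K` in `⨁ F n / F (n + 1)`:
the polynomials whose `n`-th coefficient lies in `K + F (n + 1)` for all `n`. -/
def initialIdeal {A : Type*} [CommRing A] (F : ℕ → Ideal A)
    (hmul : ∀ i j, F i * F j ≤ F (i + j)) (J : Ideal A) (hJF : ∀ n, J ^ n ≤ F n)
    (K : Ideal A) : Ideal (reesAlgebra J) where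
  carrier := {f | ∀ n, (f : A[X]).coeff n ∈ K ⊔ F (n + 1)}
  zero_mem' n := by simp
  add_mem' {f g} hf hg n := by simpa using add_mem (hf n) (hg n)
  smul_mem' f g hg n := by
    simp only [smul_eq_mul, MulMemClass.coe_mul, coeff_mul]
    refine sum_mem fun x hx => ?_
    rw [Finset.HasAntidiagonal.mem_antidiagonal] at hx
    obtain ⟨u, hu, v, hv, huv⟩ := Submodule.mem_sup.mp (hg x.2)
    rw [← huv, mul_add]
    refine add_mem (Ideal.mem_sup_left (K.mul_mem_left _ hu)) (Ideal.mem_sup_right ?_)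
    have := hmul _ _ (Ideal.mul_mem_mul (hJF _ (f.2 x.1)) hv)
    rwa [← add_assoc, hx] at this

/-- Every ideal `K` contains finitely many elements `b i ∈ F (d i)` whose initial forms generate all
initial forms of `K`: each `y ∈ K ∩ F n` is, modulo `F (n + 1)`, a combination of the `b i` with
coefficients in `F (n - d i)`. The subtraction is truncated: for `d i > n` it only says that the
coefficient is arbitrary. -/
theorem exists_initial_generators {A : Type*} [CommRing A] (F : ℕ → Ideal A)
    (hanti : Antitone F) (hmul : ∀ i j, F i * F j ≤ F (i + j))
    (J : Ideal A) (hJ : J.FG) (hJF : ∀ n, J ^ n ≤ F n)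
    (hFJ : ∀ n, F n ≤ J ^ n ⊔ F (n + 1)) [IsNoetherianRing (A ⧸ F 1)] (K : Ideal A) :
    ∃ (ι : Type) (_ : Fintype ι) (d : ι → ℕ) (b : ι → A),
      (∀ i, b i ∈ K) ∧ (∀ i, b i ∈ F (d i)) ∧
      ∀ n, ∀ y ∈ K, y ∈ F n → ∃ c : ι → A, (∀ i, c i ∈ F (n - d i)) ∧
        y - ∑ i, c i * b i ∈ F (n + 1) := by
  set N : Ideal (reesAlgebra J) := (F 1).map (algebraMap A (reesAlgebra J)) with hN
  have := reesAlgebra_quotient_isNoetherianRing (F₁ := F 1) hJ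
  set K' := initialIdeal F hmul J hJF K
  have hNcoeff : ∀ f ∈ N, ∀ n, (f : A[X]).coeff n ∈ F (n + 1) := by
    have : N ≤ initialIdeal F hmul J hJF ⊥ := by
      rw [hN, Ideal.map_le_iff_le_comap]
      intro x hx n
      refine Ideal.mem_sup_right ?_
      change (C x).coeff n ∈ _
      rw [coeff_C]
      split_ifs with h
      · simpa [h] using hx
      · exact zero_mem _
    intro f hf n
    simpa using this hf n
  obtain ⟨s, g, hg⟩ := Submodule.fg_iff_exists_fin_generating_family.mp
    (IsNoetherian.noetherian (K'.map (Ideal.Quotient.mk N)))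
  have hgf : ∀ i, ∃ f ∈ K', Ideal.Quotient.mk N f = g i := fun i =>
    (Ideal.mem_map_iff_of_surjective _ Ideal.Quotient.mk_surjective).mp
      (hg ▸ Submodule.subset_span ⟨i, rfl⟩)
  choose f hfK hfg using hgf
  have hgen : ∀ p ∈ K', ∃ h : Fin s → reesAlgebra J, p - ∑ i, h i * f i ∈ N := by
    intro p hp
    have hp' := Ideal.mem_map_of_mem (Ideal.Quotient.mk N) hp
    rw [← hg] at hp'
    obtain ⟨c, hc⟩ := (Submodule.mem_span_range_iff_exists_fun _).mp hp'
    choose h hh using fun i => Ideal.Quotient.mk_surjective (c i)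
    refine ⟨h, ?_⟩
    rw [← Ideal.Quotient.eq, ← hc]
    simp [hh, hfg]
  -- The homogeneous components of the `f i` all have degree below `D`; the elements `b i j` below
  -- are lifts to `K` of their coefficients.
  set D := (Finset.univ.sup fun i => (f i : A[X]).natDegree) + 1
  have hD : ∀ i j, D ≤ j → (f i : A[X]).coeff j = 0 := fun i j hj => by
    apply coeff_eq_zero_of_natDegree_lt
    have := Finset.le_sup (f := fun i => (f i : A[X]).natDegree) (Finset.mem_univ i)
    omega
  have hab : ∀ i j, ∃ b ∈ K, (f i : A[X]).coeff j - b ∈ F (j + 1) := fun i j => by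
    obtain ⟨u, hu, v, hv, huv⟩ := Submodule.mem_sup.mp (hfK i j)
    exact ⟨u, hu, by rw [← huv]; simpa⟩
  choose b hbK hb using hab
  have hbF : ∀ i j, b i j ∈ F j := fun i j => by
    have h1 := hJF _ ((f i).2 j)
    have h2 := hanti (Nat.le_succ j) (hb i j)
    simpa using sub_mem h1 h2
  refine ⟨Fin s × Fin D, inferInstance, fun x => x.2, fun x => b x.1 x.2, fun x => hbK _ _,
    fun x => hbF _ _, fun n y hyK hyF => ?_⟩
  -- The initial form of `y` is represented by an element `z` of `J ^ n`, so `z tⁿ` lies in `K'`.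
  obtain ⟨z, hz, w, hw, hzw⟩ := Submodule.mem_sup.mp (hFJ n hyF)
  have hzK : (⟨monomial n z, reesAlgebra.monomial_mem.mpr hz⟩ : reesAlgebra J) ∈ K' := by
    intro k
    change (monomial n z).coeff k ∈ _
    rw [coeff_monomial]
    split_ifs with h
    · subst h
      rw [eq_sub_of_add_eq hzw]
      exact sub_mem (Ideal.mem_sup_left hyK) (Ideal.mem_sup_right hw)
    · exact zero_mem _
  obtain ⟨h, hh⟩ := hgen _ hzK
  refine ⟨fun x => if (x.2 : ℕ) ≤ n then (h x.1 : A[X]).coeff (n - x.2) else 0, fun x => ?_, ?_⟩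
  · dsimp only
    split_ifs
    · exact hJF _ ((h x.1).2 _)
    · exact zero_mem _
  have hcoeff := hNcoeff _ hh n
  have hprod : ∀ i, ((h i : A[X]) * f i).coeff n =
      ∑ j : Fin D, if (j : ℕ) ≤ n then (h i : A[X]).coeff (n - j) * (f i : A[X]).coeff j else 0 := by
    intro i
    rw [mul_comm, coeff_mul, Finset.Nat.sum_antidiagonal_eq_sum_range_succ
      (fun a b => (f i : A[X]).coeff a * (h i : A[X]).coeff b),
      Fin.sum_univ_eq_sum_range (fun j => if j ≤ n then
        (h i : A[X]).coeff (n - j) * (f i : A[X]).coeff j else 0), ← Finset.sum_filter]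
    simp_rw [mul_comm ((f i : A[X]).coeff _)]
    symm
    apply Finset.sum_subset
    · intro j; simp
    · intro j hj hj'
      simp only [Finset.mem_filter, Finset.mem_range, not_and_or] at hj hj'
      rw [hD i j (by omega), mul_zero]
  have hcoeff' : z - ∑ i, ((h i : A[X]) * f i).coeff n ∈ F (n + 1) := by
    simpa [finsetSum_coeff, coeff_monomial] using hcoeff
  have hdiff : ∑ i, ((h i : A[X]) * f i).coeff n - ∑ x : Fin s × Fin D,
      (if (x.2 : ℕ) ≤ n then (h x.1 : A[X]).coeff (n - x.2) else 0) * b x.1 x.2 ∈ F (n + 1) := by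
    rw [Fintype.sum_prod_type, ← Finset.sum_sub_distrib]
    refine sum_mem fun i _ => ?_
    rw [hprod, ← Finset.sum_sub_distrib]
    refine sum_mem fun j _ => ?_
    split_ifs with hj
    · rw [← mul_sub]
      have := hmul _ _ (Ideal.mul_mem_mul (hJF _ ((h i).2 (n - j))) (hb i j))
      rwa [show n - (j : ℕ) + (j + 1) = n + 1 by omega] at this
    · simp
  have := add_mem (add_mem hcoeff' hdiff) hw
  convert this using 1
  rw [← hzw]; ring

/-- A ring that is separated and complete for a multiplicative filtration `F`, with `A ⧸ F 1`
Noetherian and associated graded ring generated over `A ⧸ F 1` by the initial forms of a finitely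
generated ideal `J ≤ F 1`, is Noetherian. Completeness is expressed through convergence of series;
the shift `d` accommodates coefficient series whose `n`-th term lies only in `F (n - d)`. -/
theorem isNoetherianRing_of_filtration {A : Type*} [CommRing A] (F : ℕ → Ideal A)
    (hanti : Antitone F) (hzero : F 0 = ⊤) (hmul : ∀ i j, F i * F j ≤ F (i + j))
    (hsep : ∀ x, (∀ n, x ∈ F n) → x = 0)
    (hcompl : ∀ (d : ℕ) (c : ℕ → A), (∀ n, c n ∈ F (n - d)) →
      ∃ s, ∀ n, s - ∑ j ∈ Finset.range n, c j ∈ F (n - d))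
    (J : Ideal A) (hJ : J.FG) (hJF : ∀ n, J ^ n ≤ F n)
    (hFJ : ∀ n, F n ≤ J ^ n ⊔ F (n + 1)) [IsNoetherianRing (A ⧸ F 1)] :
    IsNoetherianRing A := by
  rw [isNoetherianRing_iff_ideal_fg]
  intro K
  obtain ⟨ι, _, d, b, hbK, hbF, hstep⟩ := exists_initial_generators F hanti hmul J hJ hJF hFJ K
  suffices hK : K = Ideal.span (Set.range b) by
    rw [hK]; exact ⟨(Set.finite_range b).toFinset, by simp⟩
  refine le_antisymm (fun y hy => ?_) (Ideal.span_le.mpr (by rintro _ ⟨i, rfl⟩; exact hbK i))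
  choose! c hc hcy using hstep
  -- `r n` is the remainder of `y` after `n` successive approximations by combinations of the `b i`.
  let r : ℕ → A := fun n => Nat.rec y (fun n z => z - ∑ i, c n z i * b i) n
  have hr : ∀ n, r n ∈ K ∧ r n ∈ F n := by
    intro n
    induction n with
    | zero => exact ⟨hy, by simp [hzero]⟩
    | succ n ih =>
      exact ⟨sub_mem ih.1 (sum_mem fun i _ => K.mul_mem_left _ (hbK i)), hcy n _ ih.1 ih.2⟩
  have hsum : ∀ n, r n = y - ∑ i, (∑ j ∈ Finset.range n, c j (r j) i) * b i := by
    intro n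
    induction n with
    | zero => simp [r]
    | succ n ih =>
      change r n - ∑ i, c n (r n) i * b i = _
      simp only [Finset.sum_range_succ, add_mul, Finset.sum_add_distrib]
      rw [← sub_sub, ← ih]
  choose S hS using fun i => hcompl (d i) (fun n => c n (r n) i)
    (fun n => hc n _ (hr n).1 (hr n).2 i)
  rw [Ideal.mem_span_range_iff_exists_fun]
  refine ⟨S, (sub_eq_zero.mp (hsep _ fun n => ?_)).symm⟩
  have h1 : ∑ i, (S i - ∑ j ∈ Finset.range n, c j (r j) i) * b i ∈ F n :=
    sum_mem fun i _ => hanti (by omega) (hmul _ _ (Ideal.mul_mem_mul (hS i n) (hbF i)))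
  have h2 := sub_mem (hr n).2 h1
  rw [hsum n] at h2
  simpa [sub_mul, Finset.sum_sub_distrib] using h2

/-! ### The filtration of the adic completion -/

open AdicCompletion

/-- Lifts of a basis of `m ⧸ m ^ 2` generate `m` modulo `m ^ 2` (but not `m` itself in general,
since Nakayama's lemma needs `m` to be finitely generated). -/
theorem exists_fg_sup_sq {R : Type*} [CommRing R] [IsLocalRing R]
    [FiniteDimensional (IsLocalRing.ResidueField R) (IsLocalRing.CotangentSpace R)] :
    ∃ J : Ideal R, J.FG ∧ J ≤ IsLocalRing.maximalIdeal R ∧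
      IsLocalRing.maximalIdeal R ≤ J ⊔ IsLocalRing.maximalIdeal R ^ 2 := by
  set m := IsLocalRing.maximalIdeal R
  have : Module.Finite R (IsLocalRing.ResidueField R) := inferInstance
  have hfin : Module.Finite R m.Cotangent :=
    Module.Finite.trans (IsLocalRing.ResidueField R) (IsLocalRing.CotangentSpace R)
  obtain ⟨s, g, hg⟩ := Submodule.fg_iff_exists_fin_generating_family.mp hfin.fg_top
  choose f hf using fun i => m.toCotangent_surjective (g i)
  refine ⟨Ideal.span (Set.range fun i => (f i : R)),
    ⟨(Set.finite_range fun i => (f i : R)).toFinset, by simp⟩, ?_, fun x hx => ?_⟩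
  · rw [Ideal.span_le]
    rintro _ ⟨i, rfl⟩
    exact (f i).2
  have hx' : m.toCotangent ⟨x, hx⟩ ∈ Submodule.span R (Set.range g) := hg ▸ Submodule.mem_top
  obtain ⟨c, hc⟩ := (Submodule.mem_span_range_iff_exists_fun _).mp hx'
  have key : m.toCotangent ⟨x, hx⟩ = m.toCotangent (∑ i, c i • f i) := by
    rw [← hc]; simp [hf]
  rw [Ideal.toCotangent_eq] at key
  rw [← add_sub_cancel ((∑ i, c i • f i : m) : R) x]
  refine add_mem (Ideal.mem_sup_left ?_) (Ideal.mem_sup_right key)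
  simp only [Submodule.coe_sum, Submodule.coe_smul, smul_eq_mul]
  exact sum_mem fun i _ => Ideal.mul_mem_left _ _ (Ideal.subset_span ⟨i, rfl⟩)

theorem pow_le_sup_pow_succ {R : Type*} [CommRing R] {J m : Ideal R}
    (hJ : J ≤ m) (h : m ≤ J ⊔ m ^ 2) (n : ℕ) : m ^ n ≤ J ^ n ⊔ m ^ (n + 1) := by
  induction n with
  | zero => simp
  | succ n ih =>
    have h₁ : J ^ n * m ≤ J ^ (n + 1) ⊔ m ^ (n + 1 + 1) :=
      calc J ^ n * m ≤ J ^ n * (J ⊔ m ^ 2) := Ideal.mul_mono_right h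
        _ = J ^ (n + 1) ⊔ J ^ n * m ^ 2 := by rw [Ideal.mul_sup, pow_succ J n]
        _ ≤ J ^ (n + 1) ⊔ m ^ n * m ^ 2 :=
          sup_le_sup_left (Ideal.mul_mono_left (Ideal.pow_right_mono hJ n)) _
        _ = J ^ (n + 1) ⊔ m ^ (n + 1 + 1) := by rw [← pow_add]
    calc m ^ (n + 1) = m ^ n * m := pow_succ m n
      _ ≤ (J ^ n ⊔ m ^ (n + 1)) * m := Ideal.mul_mono_left ih
      _ = J ^ n * m ⊔ m ^ (n + 1 + 1) := by rw [Ideal.sup_mul, pow_succ m (n + 1)]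
      _ ≤ J ^ (n + 1) ⊔ m ^ (n + 1 + 1) := sup_le h₁ le_sup_right

theorem mem_ker_evalₐ {R : Type*} [CommRing R] {I : Ideal R} {n : ℕ} {x : AdicCompletion I R} :
    x ∈ RingHom.ker (evalₐ I n) ↔ x.val n = 0 := by
  rw [RingHom.mem_ker]
  constructor
  · intro h
    have := factor_evalₐ_eq_eval I x (n := n) (by simp)
    rw [h, _root_.map_zero] at this
    exact this.symm
  · intro h
    have := factor_eval_eq_evalₐ I x (n := n) (by simp)
    rw [← this]
    exact (congrArg _ h).trans (_root_.map_zero _)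

theorem antitone_ker_evalₐ {R : Type*} [CommRing R] (I : Ideal R) :
    Antitone fun n => RingHom.ker (evalₐ I n) := by
  intro a b hab x hx
  rw [mem_ker_evalₐ] at hx ⊢
  rw [← x.2 hab, hx, _root_.map_zero]

/-- Convergence of series in the completion: the `n`-th component of the sum is that of the partial
sum of length `n + d`, since all later terms vanish in `R ⧸ I ^ n`. -/
theorem exists_sum_sub_mem_ker {R : Type*} [CommRing R] (I : Ideal R) (d : ℕ)
    (c : ℕ → AdicCompletion I R) (hc : ∀ n, c n ∈ RingHom.ker (evalₐ I (n - d))) :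
    ∃ s, ∀ n, s - ∑ j ∈ Finset.range n, c j ∈ RingHom.ker (evalₐ I (n - d)) := by
  have hsum : ∀ k a b, k + d ≤ a → k + d ≤ b →
      ∑ j ∈ Finset.range a, c j - ∑ j ∈ Finset.range b, c j ∈ RingHom.ker (evalₐ I k) := by
    have haux : ∀ k a b, k + d ≤ b → b ≤ a →
        ∑ j ∈ Finset.range a, c j - ∑ j ∈ Finset.range b, c j ∈ RingHom.ker (evalₐ I k) := by
      intro k a b hb hab
      rw [← Finset.sum_Ico_eq_sub _ hab]
      refine sum_mem fun j hj => antitone_ker_evalₐ I ?_ (hc j)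
      have := (Finset.mem_Ico.mp hj).1
      omega
    intro k a b ha hb
    rcases le_total b a with h | h
    · exact haux k a b hb h
    · rw [← neg_sub]; exact neg_mem (haux k b a ha h)
  refine ⟨⟨fun n => (∑ j ∈ Finset.range (n + d), c j).val n, fun {a b} hab => ?_⟩, fun n => ?_⟩
  · rw [(∑ j ∈ Finset.range (b + d), c j).2 hab]
    have := mem_ker_evalₐ.mp (hsum a (b + d) (a + d) (by omega) le_rfl)
    exact sub_eq_zero.mp this
  · rw [mem_ker_evalₐ]
    change (∑ j ∈ Finset.range (n - d + d), c j).val (n - d) -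
      (∑ j ∈ Finset.range n, c j).val (n - d) = 0
    rcases le_total d n with h | h
    · rw [Nat.sub_add_cancel h, sub_self]
    · have : ∀ x : AdicCompletion I R, x ∈ RingHom.ker (evalₐ I (n - d)) := fun x => by
        rw [Nat.sub_eq_zero_of_le h, RingHom.mem_ker]
        have : Subsingleton (R ⧸ I ^ 0) := Ideal.Quotient.subsingleton_iff.mpr (by simp)
        exact Subsingleton.elim _ _
      exact mem_ker_evalₐ.mp (this (_ - _))

/-- Elements of the completion vanishing in `R ⧸ I ^ k` are approximated by elements of `I ^ k`. -/
theorem exists_mem_pow_eq {R : Type*} [CommRing R] {I : Ideal R} {k n : ℕ} (hk : k ≤ n)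
    {x : AdicCompletion I R} (hx : x ∈ RingHom.ker (evalₐ I k)) :
    ∃ r ∈ I ^ k, x - algebraMap R _ r ∈ RingHom.ker (evalₐ I n) := by
  obtain ⟨r, hr⟩ := Ideal.Quotient.mk_surjective (evalₐ I n x)
  have h₁ : x - algebraMap R _ r ∈ RingHom.ker (evalₐ I n) := by
    rw [RingHom.mem_ker, map_sub, AlgHom.commutes, ← hr]
    exact sub_self _
  refine ⟨r, ?_, h₁⟩
  have h₂ := sub_mem hx (antitone_ker_evalₐ I hk h₁)
  rw [sub_sub_cancel, RingHom.mem_ker, AlgHom.commutes] at h₂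
  exact Ideal.Quotient.eq_zero_iff_mem.mp h₂

theorem algebraMap_mem_ker {R : Type*} [CommRing R] {I : Ideal R} {n : ℕ} {r : R}
    (hr : r ∈ I ^ n) : algebraMap R (AdicCompletion I R) r ∈ RingHom.ker (evalₐ I n) := by
  rw [RingHom.mem_ker, AlgHom.commutes]
  exact Ideal.Quotient.eq_zero_iff_mem.mpr hr

theorem ker_mul_le {R : Type*} [CommRing R] (I : Ideal R) (i j : ℕ) :
    RingHom.ker (evalₐ I i) * RingHom.ker (evalₐ I j) ≤ RingHom.ker (evalₐ I (i + j)) := by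
  rw [Ideal.mul_le]
  intro x hx y hy
  obtain ⟨r, hr, hxr⟩ := exists_mem_pow_eq (Nat.le_add_right i j) hx
  obtain ⟨t, ht, hyt⟩ := exists_mem_pow_eq (Nat.le_add_left j i) hy
  have hrt : algebraMap R _ (r * t) ∈ RingHom.ker (evalₐ I (i + j)) :=
    algebraMap_mem_ker (pow_add I i j ▸ Ideal.mul_mem_mul hr ht)
  have h₁ := Ideal.mul_mem_right y _ hxr
  have h₂ := Ideal.mul_mem_left _ (algebraMap R _ r) hyt
  have h₃ := add_mem (add_mem h₁ h₂) hrt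
  rw [map_mul] at h₃
  convert h₃ using 1
  ring

/-- The ideal `ker (R̂ → R ⧸ m)` is finitely generated and its image in `R ⧸ m ^ 2` is
`m ⧸ m ^ 2`. -/
theorem finiteDimensional_of_isNoetherianRing (R : Type*) [CommRing R] [IsLocalRing R]
    [IsNoetherianRing (AdicCompletion (IsLocalRing.maximalIdeal R) R)] :
    FiniteDimensional (IsLocalRing.ResidueField R) (IsLocalRing.CotangentSpace R) := by
  set m := IsLocalRing.maximalIdeal R
  have hmap : (RingHom.ker (evalₐ m 1)).map (evalₐ m 2).toRingHom = m.cotangentIdeal := by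
    refine le_antisymm (Ideal.map_le_iff_le_comap.mpr fun x hx => ?_) ?_
    · obtain ⟨r, hr, hxr⟩ := exists_mem_pow_eq one_le_two hx
      rw [RingHom.mem_ker, map_sub, sub_eq_zero, AlgHom.commutes] at hxr
      change evalₐ m 2 x ∈ m.cotangentIdeal
      rw [hxr]
      exact Ideal.mk_mem_cotangentIdeal.mpr (by simpa using hr)
    · intro y hy
      obtain ⟨r, rfl⟩ := Ideal.Quotient.mk_surjective y
      have := Ideal.mem_map_of_mem (evalₐ m 2).toRingHom (algebraMap_mem_ker (I := m) (n := 1)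
        (r := r) (by simpa using Ideal.mk_mem_cotangentIdeal.mp hy))
      change evalₐ m 2 _ ∈ Ideal.map (evalₐ m 2).toRingHom _ at this
      rwa [AlgHom.commutes] at this
  have hfg : m.cotangentIdeal.FG :=
    hmap ▸ Ideal.FG.map (IsNoetherian.noetherian _) (evalₐ m 2).toRingHom
  have h₁ : Module.Finite (R ⧸ m ^ 2) m.cotangentIdeal := Module.Finite.of_fg hfg
  have h₂ : Module.Finite R m.cotangentIdeal := Module.Finite.trans (R ⧸ m ^ 2) _
  have h₃ : Module.Finite R m.Cotangent := Module.Finite.equiv m.cotangentEquivIdeal.symm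
  exact Module.Finite.of_restrictScalars_finite R _ _

theorem isNoetherianRing_of_finiteDimensional (R : Type*) [CommRing R] [IsLocalRing R]
    [FiniteDimensional (IsLocalRing.ResidueField R) (IsLocalRing.CotangentSpace R)] :
    IsNoetherianRing (AdicCompletion (IsLocalRing.maximalIdeal R) R) := by
  obtain ⟨J, hJ, hJm, hmJ⟩ := exists_fg_sup_sq (R := R)
  set m := IsLocalRing.maximalIdeal R
  have : IsNoetherianRing (AdicCompletion m R ⧸ RingHom.ker (evalₐ m 1)) := by
    have : IsNoetherianRing (R ⧸ m ^ 1) := by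
      rw [pow_one]
      exact inferInstanceAs (IsNoetherianRing (IsLocalRing.ResidueField R))
    exact isNoetherianRing_of_ringEquiv (R ⧸ m ^ 1)
      (RingHom.quotientKerEquivOfSurjective (surjective_evalₐ m 1)).symm
  have hpow : ∀ n, J.map (algebraMap R (AdicCompletion m R)) ^ n ≤ RingHom.ker (evalₐ m n) := by
    intro n
    rw [← Ideal.map_pow, Ideal.map_le_iff_le_comap]
    exact fun r hr => algebraMap_mem_ker (Ideal.pow_right_mono hJm n hr)
  refine isNoetherianRing_of_filtration (fun n => RingHom.ker (evalₐ m n)) (antitone_ker_evalₐ m)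
    ?_ (ker_mul_le m) (fun x hx => ext_evalₐ fun n => ?_) (exists_sum_sub_mem_ker m)
    (J.map (algebraMap R _)) (Ideal.FG.map hJ _) hpow fun n x hx => ?_
  · refine eq_top_iff.mpr fun x _ => ?_
    have : Subsingleton (R ⧸ m ^ 0) := Ideal.Quotient.subsingleton_iff.mpr (by simp)
    exact Subsingleton.elim _ _
  · rw [_root_.map_zero]; exact hx n
  · obtain ⟨r, hr, hxr⟩ := exists_mem_pow_eq (Nat.le_succ n) hx
    obtain ⟨u, hu, v, hv, rfl⟩ := Submodule.mem_sup.mp (pow_le_sup_pow_succ hJm hmJ n hr)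
    rw [← sub_add_cancel x (algebraMap R _ (u + v)), map_add]
    refine add_mem (Ideal.mem_sup_right (by rwa [← map_add])) (add_mem (Ideal.mem_sup_left ?_)
      (Ideal.mem_sup_right (algebraMap_mem_ker hv)))
    rw [← Ideal.map_pow]
    exact Ideal.mem_map_of_mem _ hu

/-! ### The equivalence -/

/-- for a commutative local ring `R` with maximal ideal `m` and residue field
`k`, the `m`-adic completion of `R` is Noetherian if and only if the `k`-vector space `m/m²`
is finite dimensional, i.e. if and only if `R` has finite embedding dimension. -/
theorem stmt13 (R : Type*) [CommRing R] [IsLocalRing R] :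
    IsNoetherianRing (AdicCompletion (IsLocalRing.maximalIdeal R) R) ↔
      FiniteDimensional (IsLocalRing.ResidueField R) (IsLocalRing.CotangentSpace R) := by
  exact ⟨fun _ => finiteDimensional_of_isNoetherianRing R,
    fun _ => isNoetherianRing_of_finiteDimensional R⟩
end
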